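/- Let κ be a cardinal with κ > 𝔠 (the cardinality of the continuum) and let τ = log κ. For a subset S of an abelian group G, the following are equivalent: (i) there exists an injective group homomorphism ϖ : G → 𝕋^κ such that ϖ(S) is dense in 𝕋^κ; (ii) |G| ≤ 2^κ and τ ≤ |nS| for every integer n ≥ 1; (iii) |G| ≤ 2^κ and S is τ-wide. -/

import Mathlib

/-!
Only the implication from (ii) to (i) is deep. A dense subset `D` of `𝕋 ^ κ` satisfies
`κ ≤ 2 ^ |D|`, and multiplication by `n` maps dense sets to dense sets, which gives (ii) from (i).
Since `κ > 𝔠`, the cardinal `τ = log κ` is uncountable, so a set of fewer than `τ` elements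
generates a group of fewer than `τ` elements, and (ii) and (iii) are equivalent.

For the converse, `τ` many points `c ξ` of `𝕋 ^ κ` with precisions `N ξ` are fixed as in the
Hewitt–Marczewski–Pondiczery theorem (`exists_targets`), each point and precision recurring
cofinally. By (ii), elements `s ξ` of `S` can be chosen recursively with `(N ξ + 2)! • s ξ` outside
the group `H ξ` generated by the earlier ones. So `s ξ` has large order modulo `H ξ`, and a
character defined on `H ξ` extends with its value at `s ξ` as close as wanted to a prescribed point
of the circle. Each coordinate of the homomorphism is assigned a stage `η`: its character vanishes
before `η`, is faithful on the cyclic group generated by `s η` modulo `H η`, and after `η` follows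
the targets (`exists_char_step`). As every stage is assigned to some coordinate, the homomorphism
is injective on the group `H` generated by all `s ξ`; since finitely many coordinates all follow
the targets from some stage on, the image of `S ∩ H` is dense (`exists_dense_hom`).

Finally `|H| ≤ κ`, while `𝕋 ^ κ` contains `2 ^ κ` copies of itself that pairwise meet in `0`. One
of them meets the image of `H` trivially; being divisible, it splits off by a projection that
kills the image of `H`, and `G ⧸ H`, which embeds in `𝕋 ^ κ` because `|G| ≤ 2 ^ κ`, can be sent
into it. This makes the homomorphism injective on `G` without changing it on `H`
(`exists_injective_extension`).
-/

open Cardinal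

universe u

/-- For an infinite cardinal `τ`, a subset `S` of an abelian group `G` is `τ`-wide if
`nS \ ⟨S'⟩ ≠ ∅` for every integer `n ≥ 1` and every `S' ⊆ S` with `|S'| < τ`. -/
def IsWide {G : Type u} [AddCommGroup G] (τ : Cardinal.{u}) (S : Set G) : Prop :=
  ∀ n : ℕ, 1 ≤ n → ∀ S' : Set G, S' ⊆ S → #S' < τ →
    (((fun s => n • s) '' S) \ (AddSubgroup.closure S' : Set G)).Nonempty

/-- `log κ = min {τ ≥ ℵ₀ : κ ≤ 2^τ}`. -/
noncomputable def clog (κ : Cardinal.{u}) : Cardinal.{u} :=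
  sInf {τ : Cardinal.{u} | ℵ₀ ≤ τ ∧ κ ≤ (2 : Cardinal.{u}) ^ τ}

/-! ### Divisible groups and characters -/

lemma exists_extend {M N : Type*} [AddCommGroup M] [AddCommGroup N] {D : Type*} [AddCommGroup D]
    [DivisibleBy D ℤ] (f : M →+ N) (hf : Function.Injective f) (g : M →+ D) :
    ∃ h : N →+ D, ∀ x, h (f x) = g x := by
  obtain ⟨h, hh⟩ := (Module.Baer.of_divisible D).extension_property_addMonoidHom f hf g
  exact ⟨h, fun x => by rw [← hh]; rfl⟩

/-- A character of an abelian group may take at `q` any value killed by the order of `q`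
(which is `0` when `q` has infinite order, so that every value is allowed). -/
lemma exists_hom_eq {Q : Type*} [AddCommGroup Q] (q : Q) (u : AddCircle (1 : ℝ))
    (h : addOrderOf q • u = 0) : ∃ δ : Q →+ AddCircle (1 : ℝ), δ q = u := by
  let f : ZMod (addOrderOf q) →+ Q :=
    ZMod.lift _ ⟨zmultiplesHom Q q, by simp⟩
  let g : ZMod (addOrderOf q) →+ AddCircle (1 : ℝ) :=
    ZMod.lift _ ⟨zmultiplesHom _ u, by simpa using h⟩
  have hf : Function.Injective f := by
    refine (ZMod.lift_injective _).2 ?_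
    intro m hm
    rw [ZMod.intCast_zmod_eq_zero_iff_dvd]
    simpa [addOrderOf_dvd_iff_zsmul_eq_zero] using hm
  obtain ⟨δ, hδ⟩ := exists_extend f hf g
  refine ⟨δ, ?_⟩
  have := hδ ((1 : ℤ) : ZMod _)
  simpa only [f, g, ZMod.lift_coe, zmultiplesHom_apply, one_zsmul] using this

/-- The `k`-torsion of the circle is a `1 / k`-net; for `k = 0` it is the whole circle. -/
lemma exists_torsion_near (k : ℕ) (y : AddCircle (1 : ℝ)) (ε : ℝ) (hε : 0 < ε)
    (hk : k = 0 ∨ 1 / ε < k) : ∃ u : AddCircle (1 : ℝ), k • u = 0 ∧ dist u y < ε := by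
  rcases hk with rfl | hk
  · exact ⟨y, by simp, by simpa⟩
  have hk0 : (0 : ℝ) < k := lt_trans (by positivity) hk
  induction y using QuotientAddGroup.induction_on with | _ x =>
  refine ⟨((round (k * x) / k : ℝ) : AddCircle (1 : ℝ)), ?_, ?_⟩
  · rw [← AddCircle.coe_nsmul, AddCircle.coe_eq_zero_iff]
    refine ⟨round (k * x), ?_⟩
    rw [nsmul_eq_mul]; field_simp; simp
  · rw [dist_eq_norm, ← AddCircle.coe_sub]
    have h1 := abs_sub_round (k * x)
    refine lt_of_le_of_lt (QuotientAddGroup.norm_mk_le_norm) ?_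
    rw [Real.norm_eq_abs]
    have : (round (k * x) / k : ℝ) - x = -((k * x - round (k * x)) / k) := by field_simp; ring
    rw [this, abs_neg, abs_div, abs_of_pos hk0, div_lt_iff₀ hk0]
    rw [div_lt_iff₀ hε] at hk
    linarith

/-! ### Embedding groups in powers of the circle -/

/-- By the Erdős–Kaplansky theorem `I → K` has dimension at least `2 ^ #I`, so it contains a copy
of every vector space of cardinality at most `2 ^ #I`. -/
lemma exists_linear_embedding {K : Type} [Field K] {V : Type u} [AddCommGroup V]
    [Module K V] {I : Type u} [Infinite I] (hV : #V ≤ 2 ^ #I) :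
    ∃ f : V →ₗ[K] (I → K), Function.Injective f := by
  have h1 : Module.rank K V ≤ Module.rank K (I → K) := by
    rw [rank_fun_infinite]
    refine (rank_le_card K V).trans (hV.trans ?_)
    rw [mk_arrow, lift_uzero]
    refine Cardinal.power_le_power_right ?_
    rw [← Cardinal.lift_two.{u, 0}, Cardinal.lift_le]
    exact Cardinal.two_le_iff.2 ⟨0, 1, zero_ne_one⟩
  let b := Module.Basis.ofVectorSpace K V
  let c := Module.Basis.ofVectorSpace K (I → K)
  rw [← b.mk_eq_rank'', ← c.mk_eq_rank''] at h1
  obtain ⟨e⟩ := h1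
  refine ⟨c.repr.symm.toLinearMap ∘ₗ Finsupp.lmapDomain K K e ∘ₗ b.repr.toLinearMap, ?_⟩
  exact c.repr.symm.injective.comp
    ((Finsupp.mapDomain_injective e.injective).comp b.repr.injective)

lemma exists_embedding_of_field {K : Type} [Field K] (j : K →+ AddCircle (1 : ℝ))
    (hj : Function.Injective j) {V : Type u} [AddCommGroup V]
    [Module K V] {I : Type u} [Infinite I] (hV : #V ≤ 2 ^ #I) :
    ∃ f : V →+ (I → AddCircle (1 : ℝ)), Function.Injective f := by
  obtain ⟨f, hf⟩ := exists_linear_embedding (K := K) hV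
  refine ⟨(AddMonoidHom.compLeft j I).comp f.toAddMonoidHom, ?_⟩
  exact (Function.Injective.comp_left hj).comp hf

/-- Rationalize `Q` and embed the resulting `ℚ`-vector space in a power of the circle, using the
embedding `q ↦ √2 q` of `ℚ` in the circle. -/
lemma exists_hom_ker_torsion {Q : Type u} [AddCommGroup Q] {I : Type u} [Infinite I]
    (hQ : #Q ≤ 2 ^ #I) :
    ∃ f : Q →+ (I → AddCircle (1 : ℝ)), ∀ x, f x = 0 → ∃ n : ℕ, 1 ≤ n ∧ n • x = 0 := by
  let S := nonZeroDivisors ℤ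
  let V := LocalizedModule S Q
  have hV : #V ≤ 2 ^ #I := by
    have h1 : #V ≤ #(Q × S) := by
      refine Cardinal.mk_le_of_surjective (f := fun p : Q × S => LocalizedModule.mk p.1 p.2) ?_
      intro v
      induction v using LocalizedModule.induction_on with | _ m s => exact ⟨(m, s), rfl⟩
    refine h1.trans ?_
    have h2 : ℵ₀ ≤ (2 : Cardinal.{u}) ^ #I :=
      (Cardinal.aleph0_le_mk I).trans (Cardinal.cantor _).le
    rw [mk_prod]
    refine Cardinal.mul_le_of_le h2 (by simpa using hQ) ?_
    refine le_trans ?_ h2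
    rw [Cardinal.lift_le_aleph0]
    exact Cardinal.mk_le_aleph0
  let e : FractionRing ℤ →+ ℝ :=
    ((algebraMap ℚ ℝ) : ℚ →+ ℝ).comp (FractionRing.algEquiv ℤ ℚ).toRingEquiv.toAddMonoidHom
  have he : Function.Injective e :=
    (algebraMap ℚ ℝ).injective.comp (FractionRing.algEquiv ℤ ℚ).injective
  let j : FractionRing ℤ →+ AddCircle (1 : ℝ) :=
    ((QuotientAddGroup.mk' (AddSubgroup.zmultiples (1 : ℝ))).comp
      (AddMonoidHom.mulLeft (√2 : ℝ))).comp e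
  have hj : Function.Injective j := by
    rw [injective_iff_map_eq_zero]
    intro a ha
    have ha' : ((√2 * e a : ℝ) : AddCircle (1 : ℝ)) = 0 := ha
    obtain ⟨n, hn⟩ := (AddCircle.coe_eq_zero_iff _).1 ha'
    by_contra h0
    have h1 : (FractionRing.algEquiv ℤ ℚ a) ≠ 0 := by simpa using h0
    have := irrational_sqrt_two.mul_ratCast h1
    exact this ⟨n, by simpa [e] using hn⟩
  obtain ⟨f, hf⟩ := exists_embedding_of_field (K := FractionRing ℤ) j hj (V := V) hV
  refine ⟨f.comp (LocalizedModule.mkLinearMap S Q).toAddMonoidHom, fun x hx => ?_⟩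
  have hx' : LocalizedModule.mkLinearMap S Q x = 0 := by
    apply (injective_iff_map_eq_zero f).1 hf
    exact hx
  rw [LocalizedModule.mkLinearMap_apply, ← LocalizedModule.zero_mk 1, LocalizedModule.mk_eq] at hx'
  obtain ⟨s, hs⟩ := hx'
  have hs0 : (s : ℤ) ≠ 0 := nonZeroDivisors.coe_ne_zero s
  refine ⟨(s : ℤ).natAbs, Int.natAbs_pos.2 hs0, ?_⟩
  have hs' : (s : ℤ) • x = 0 := by
    have h := hs
    simp only [smul_zero, one_smul] at h
    exact h
  rw [← natCast_zsmul]
  rcases Int.natAbs_eq (s : ℤ) with h | h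
  · rw [← h, hs']
  · rw [h] at hs'
    simpa using hs'

/-- The `p`-torsion of `Q` is an `𝔽_p`-vector space; embed it in a power of the circle and extend
to all of `Q`. -/
lemma exists_hom_ker_prime {Q : Type u} [AddCommGroup Q] {I : Type u} [Infinite I]
    (hQ : #Q ≤ 2 ^ #I) (p : ℕ) [hp : Fact p.Prime] :
    ∃ f : Q →+ (I → AddCircle (1 : ℝ)), ∀ x, f x = 0 → p • x = 0 → x = 0 := by
  let V : AddSubgroup Q := AddSubgroup.torsionBy Q (p : ℤ)
  have hVm : ∀ x : V, p • x = 0 := by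
    rintro ⟨x, hx⟩
    ext
    have : (p : ℤ) • x = 0 := hx
    simpa using this
  let _ : Module (ZMod p) V := AddCommGroup.zmodModule hVm
  obtain ⟨f, hf⟩ := exists_embedding_of_field (K := ZMod p) ZMod.toAddCircle
    (ZMod.toAddCircle_injective p) (V := V) ((mk_subtype_le _).trans hQ)
  obtain ⟨g, hg⟩ := exists_extend V.subtype V.subtype_injective f
  refine ⟨g, fun x hx hpx => ?_⟩
  have hxV : x ∈ V := by
    change (p : ℤ) • x = 0
    simpa using hpx
  have := hg ⟨x, hxV⟩
  have h0 : f ⟨x, hxV⟩ = 0 := by rw [← this]; exact hx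
  simpa using (injective_iff_map_eq_zero f).1 hf _ h0

/-- Every abelian group of cardinality at most `2 ^ #I` embeds in `𝕋 ^ I`: combine one
homomorphism with torsion kernel and, for each prime `p`, one whose kernel has no element of
order `p`; a nonzero torsion element has a multiple of prime order. -/
lemma exists_embedding {Q : Type u} [AddCommGroup Q] {I : Type u} [Infinite I]
    (hQ : #Q ≤ 2 ^ #I) :
    ∃ f : Q →+ (I → AddCircle (1 : ℝ)), Function.Injective f := by
  obtain ⟨f₀, hf₀⟩ := exists_hom_ker_torsion hQ
  have hp : ∀ p : Nat.Primes, ∃ f : Q →+ (I → AddCircle (1 : ℝ)),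
      ∀ x, f x = 0 → (p : ℕ) • x = 0 → x = 0 := fun p =>
    haveI : Fact (p : ℕ).Prime := ⟨p.2⟩
    exists_hom_ker_prime hQ p
  choose f hf using hp
  have hcard : #(Option Nat.Primes × I) = #I := by
    rw [mk_prod, lift_uzero]
    refine Cardinal.mul_eq_right (Cardinal.aleph0_le_mk I) ?_ ?_
    · exact le_trans (Cardinal.lift_le_aleph0.2 Cardinal.mk_le_aleph0) (Cardinal.aleph0_le_mk I)
    · simp [Cardinal.aleph0_ne_zero]
  obtain ⟨e⟩ := Cardinal.eq.1 hcard
  let F : Option Nat.Primes → Q →+ (I → AddCircle (1 : ℝ)) := fun o => o.elim f₀ f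
  let g : Q →+ (I → AddCircle (1 : ℝ)) :=
    { toFun := fun x i => F (e.symm i).1 x (e.symm i).2
      map_zero' := by ext i; simp
      map_add' := fun x y => by ext i; simp }
  refine ⟨g, (injective_iff_map_eq_zero g).2 fun x hx => ?_⟩
  have hF : ∀ o, F o x = 0 := by
    intro o
    ext i
    have := congrFun hx (e (o, i))
    simpa [g] using this
  by_contra hx0
  obtain ⟨n, hn, hnx⟩ := hf₀ x (hF none)
  have hd : 0 < addOrderOf x := addOrderOf_pos_iff.2 (isOfFinAddOrder_iff_nsmul_eq_zero.2 ⟨n, hn, hnx⟩)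
  have hne1 : addOrderOf x ≠ 1 := by simpa using hx0
  obtain ⟨p, hpp, m, hm⟩ := Nat.exists_prime_and_dvd hne1
  have hmx : m • x = 0 := by
    refine hf ⟨p, hpp⟩ (m • x) ?_ ?_
    · rw [map_nsmul]
      have := hF (some ⟨p, hpp⟩)
      change f ⟨p, hpp⟩ x = 0 at this
      rw [this, smul_zero]
    · change p • m • x = 0
      rw [← mul_smul, ← hm, addOrderOf_nsmul_eq_zero]
  have h1 := addOrderOf_dvd_of_nsmul_eq_zero hmx
  have h2 : m ≠ 0 := by rintro rfl; omega
  have h3 := Nat.le_of_dvd (Nat.pos_of_ne_zero h2) h1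
  rw [hm] at h3
  have := hpp.two_le
  nlinarith [Nat.pos_of_ne_zero h2]

/-- A homomorphism into `𝕋 ^ I` that is injective on a small subgroup `H` can be changed outside
`H` so as to become injective on the whole group. The values off `H` are separated by a copy of
`𝕋 ^ I` inside `𝕋 ^ I` that meets the image of `H` trivially. -/
lemma exists_injective_extension {G : Type u} [AddCommGroup G] {I : Type u} [Infinite I]
    (hG : #G ≤ 2 ^ #I) (H : AddSubgroup G) (hH : #H ≤ #I)
    (φ : G →+ (I → AddCircle (1 : ℝ))) (hφ : ∀ x ∈ H, φ x = 0 → x = 0) :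
    ∃ ψ : G →+ (I → AddCircle (1 : ℝ)), Function.Injective ψ ∧ ∀ x ∈ H, ψ x = φ x := by
  classical
  obtain ⟨e⟩ : Nonempty (I ≃ I × I) := Cardinal.eq.1 (by simp)
  -- the copies `j A` of `𝕋 ^ I` in `𝕋 ^ (I × I)`, `A ⊆ I` nonempty, pairwise meet in `0`
  let j : Set I → (I → AddCircle (1 : ℝ)) →+ (I → AddCircle (1 : ℝ)) := fun A =>
    { toFun := fun x i => if (e i).1 ∈ A then x (e i).2 else 0
      map_zero' := by ext i; simp
      map_add' := fun x y => by ext i; simp; split_ifs <;> simp }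
  have hj : ∀ A x k l, j A x (e.symm (k, l)) = if k ∈ A then x l else 0 := by
    intro A x k l; simp [j]
  have hjinj : ∀ A, A.Nonempty → ∀ x, j A x = 0 → x = 0 := by
    rintro A ⟨k, hk⟩ x hx
    ext l
    have := congrFun hx (e.symm (k, l))
    rw [hj, if_pos hk] at this
    exact this
  have hdisj : ∀ A B, A.Nonempty → B.Nonempty → A ≠ B → ∀ x y, j A x = j B y → x = 0 := by
    intro A B hA hB hAB x y hxy
    have key : ∀ k l, (if k ∈ A then x l else 0) = if k ∈ B then y l else 0 := by
      intro k l; rw [← hj, ← hj, hxy]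
    by_cases h : A ⊆ B
    · obtain ⟨k, hkB, hkA⟩ := Set.exists_of_ssubset (h.ssubset_of_ne hAB)
      obtain ⟨k', hk'⟩ := hA
      ext l
      have h1 := key k l
      have h2 := key k' l
      rw [if_neg hkA, if_pos hkB] at h1
      rw [if_pos hk', if_pos (h hk')] at h2
      rw [h2, ← h1]; rfl
    · obtain ⟨k, hkA, hkB⟩ := Set.not_subset.1 h
      ext l
      have h1 := key k l
      rwa [if_pos hkA, if_neg hkB] at h1
  -- each nonzero element of `φ(H)` lies in at most one copy, and there are more than `#I` copies
  obtain ⟨A, hA, hAH⟩ : ∃ A : Set I, A.Nonempty ∧ ∀ h ∈ H, ∀ x, j A x = φ h → x = 0 := by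
    by_contra hcon
    push Not at hcon
    choose! h hhH x hhx hx0 using hcon
    have hinj : Set.InjOn h {A | A.Nonempty} := by
      intro A hA B hB hAB
      by_contra hne
      exact hx0 A hA (hdisj A B hA hB hne (x A) (x B) (by rw [hhx A hA, hhx B hB, hAB]))
    let F : Set I → Option H := fun A => if hA : A.Nonempty then some ⟨h A, hhH A hA⟩ else none
    have hF : Function.Injective F := by
      intro A B hAB
      by_cases hA : A.Nonempty <;> by_cases hB : B.Nonempty
      · simp only [F, dif_pos hA, dif_pos hB, Option.some.injEq, Subtype.mk.injEq] at hAB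
        exact hinj hA hB hAB
      · simp [F, hA, hB] at hAB
      · simp [F, hA, hB] at hAB
      · rw [Set.not_nonempty_iff_eq_empty.1 hA, Set.not_nonempty_iff_eq_empty.1 hB]
    have h1 := Cardinal.mk_le_of_injective hF
    rw [mk_set, mk_option] at h1
    have h2 : #H + 1 ≤ #I := Cardinal.add_le_of_le (Cardinal.aleph0_le_mk I) hH
      (Cardinal.one_le_aleph0.trans (Cardinal.aleph0_le_mk I))
    exact absurd (h1.trans h2) (not_le.2 (Cardinal.cantor _))
  -- a retraction onto the copy that kills `φ(H)`
  obtain ⟨ρ, hρJ, hρH⟩ : ∃ ρ : (I → AddCircle (1 : ℝ)) →+ (I → AddCircle (1 : ℝ)),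
      (∀ x, ρ (j A x) = x) ∧ ∀ h ∈ H, ρ (φ h) = 0 := by
    let m : (I → AddCircle (1 : ℝ)) × H →+ (I → AddCircle (1 : ℝ)) :=
      AddMonoidHom.coprod (j A) (φ.comp H.subtype)
    have hm : Function.Injective m := by
      rw [injective_iff_map_eq_zero]
      rintro ⟨x, h⟩ hxh
      have h1 : j A x + φ h = 0 := hxh
      have h2 : x = 0 := hAH (-h) (neg_mem h.2) x (by rw [map_neg]; exact eq_neg_of_add_eq_zero_left h1)
      subst h2
      rw [map_zero, zero_add] at h1
      have := hφ h h.2 h1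
      ext <;> simp [this]
    obtain ⟨ρ, hρ⟩ := exists_extend m hm (AddMonoidHom.fst _ _)
    refine ⟨ρ, fun x => ?_, fun h hh => ?_⟩
    · simpa [m] using hρ (x, 0)
    · simpa [m] using hρ (0, ⟨h, hh⟩)
  obtain ⟨θ, hθ⟩ := exists_embedding (Q := G ⧸ H) (I := I) (Cardinal.mk_quotient_le.trans hG)
  let q := QuotientAddGroup.mk' H
  refine ⟨φ - (j A).comp (ρ.comp φ) + (j A).comp (θ.comp q), ?_, fun x hx => ?_⟩
  · rw [injective_iff_map_eq_zero]
    intro x hx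
    have hx' : φ x - j A (ρ (φ x)) + j A (θ (q x)) = 0 := hx
    have h1 := congrArg ρ hx'
    rw [map_add, map_sub, hρJ, hρJ, sub_self, zero_add, map_zero] at h1
    have h2 : q x = 0 := (injective_iff_map_eq_zero θ).1 hθ _ h1
    have h3 : x ∈ H := (QuotientAddGroup.eq_zero_iff x).1 h2
    rw [h2, hρH x h3] at hx'
    exact hφ x h3 (by simpa using hx')
  · have h2 : q x = 0 := (QuotientAddGroup.eq_zero_iff x).2 hx
    change φ x - j A (ρ (φ x)) + j A (θ (q x)) = _
    rw [h2, hρH x hx]; simp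

/-! ### Transfinite construction of characters -/

lemma mk_closure_le {G : Type u} [AddCommGroup G] (S : Set G) :
    #(AddSubgroup.closure S) ≤ max #S ℵ₀ := by
  let T : Set G := S ∪ -S
  have hT : #(List T) ≤ max #S ℵ₀ := by
    refine (Cardinal.mk_list_le_max _).trans (max_le (le_max_right _ _) ?_)
    refine (Cardinal.mk_union_le _ _).trans ?_
    have h : #(-S : Set G) = #S := by
      rw [← Set.image_neg_eq_neg]
      exact Cardinal.mk_image_eq neg_injective
    rw [h]
    exact Cardinal.add_le_of_le (le_max_right _ _) (le_max_left _ _) (le_max_left _ _)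
  refine le_trans ?_ hT
  refine (Cardinal.mk_le_mk_of_subset (t := Set.range fun l : List T => (l.map (↑)).sum) ?_).trans
    Cardinal.mk_range_le
  intro x hx
  have hx' : x ∈ AddSubmonoid.closure T := by
    rw [← AddSubgroup.closure_toAddSubmonoid]
    exact hx
  obtain ⟨l, hl, rfl⟩ := AddSubmonoid.exists_list_of_mem_closure hx'
  lift l to List T using hl
  exact ⟨l, rfl⟩

/-- Characters agreeing with `c` on initial segments can be glued, by compactness of the set of
all homomorphisms from `G` to the circle. -/
lemma exists_char_glue {G ι : Type*} [AddCommGroup G] [LinearOrder ι] (s : ι → G)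
    (c : ι → AddCircle (1 : ℝ)) (A : Set ι)
    (h : ∀ ζ ∈ A, ∃ χ : G →+ AddCircle (1 : ℝ), ∀ ζ' ≤ ζ, χ (s ζ') = c ζ') :
    ∃ χ : G →+ AddCircle (1 : ℝ), ∀ ζ ∈ A, χ (s ζ) = c ζ := by
  rcases A.eq_empty_or_nonempty with rfl | hA
  · exact ⟨0, by simp⟩
  have := hA.to_subtype
  let t : A → Set (G → AddCircle (1 : ℝ)) := fun ζ =>
    {f | (∀ x y, f (x + y) = f x + f y) ∧ ∀ ζ' ≤ (ζ : ι), f (s ζ') = c ζ'}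
  have hcl : ∀ ζ, IsClosed (t ζ) := by
    intro ζ
    refine IsClosed.and ?_ ?_
    · simp only [Set.ofPred_forall]
      exact isClosed_iInter fun x => isClosed_iInter fun y =>
        isClosed_eq (continuous_apply _) (by fun_prop)
    · simp only [Set.ofPred_forall]
      exact isClosed_iInter fun x => isClosed_iInter fun y =>
        isClosed_eq (continuous_apply _) continuous_const
  obtain ⟨f, hf⟩ := IsCompact.nonempty_iInter_of_directed_nonempty_isCompact_isClosed t
    (by
      refine directed_of_isDirected_le fun a b hab f hf => ⟨hf.1, fun ζ' hζ' => hf.2 ζ' ?_⟩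
      exact hζ'.trans hab)
    (fun ζ => by
      obtain ⟨χ, hχ⟩ := h ζ ζ.2
      exact ⟨χ, map_add χ, hχ⟩)
    (fun ζ => (hcl ζ).isCompact) hcl
  rw [Set.mem_iInter] at hf
  obtain ⟨ζ₀, hζ₀⟩ := hA
  exact ⟨AddMonoidHom.mk' f (hf ⟨ζ₀, hζ₀⟩).1, fun ζ hζ => (hf ⟨ζ, hζ⟩).2 ζ le_rfl⟩

/-- Transfinite construction of a character with prescribed conditions at the points `s ξ`, when
each new condition can be met without changing the values at the earlier points. -/
lemma exists_char_of_step {G ι : Type*} [AddCommGroup G] [LinearOrder ι] [WellFoundedLT ι]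
    (s : ι → G) (U : ι → Set (AddCircle (1 : ℝ)))
    (h : ∀ ξ, ∀ χ : G →+ AddCircle (1 : ℝ), (∀ ζ < ξ, χ (s ζ) ∈ U ζ) →
      ∃ χ' : G →+ AddCircle (1 : ℝ), (∀ ζ < ξ, χ' (s ζ) = χ (s ζ)) ∧ χ' (s ξ) ∈ U ξ) :
    ∃ χ : G →+ AddCircle (1 : ℝ), ∀ ξ, χ (s ξ) ∈ U ξ := by
  classical
  let P : (ξ : ι) → ((ζ : ι) → ζ < ξ → AddCircle (1 : ℝ)) → (G →+ AddCircle (1 : ℝ)) → Prop :=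
    fun ξ c χ => (∀ ζ (hζ : ζ < ξ), χ (s ζ) = c ζ hζ) ∧ χ (s ξ) ∈ U ξ
  let step : (ξ : ι) → ((ζ : ι) → ζ < ξ → AddCircle (1 : ℝ)) → AddCircle (1 : ℝ) :=
    fun ξ c => if hc : ∃ χ, P ξ c χ then hc.choose (s ξ) else 0
  let c : ι → AddCircle (1 : ℝ) := wellFounded_lt.fix step
  have hc : ∀ ξ, c ξ = step ξ fun ζ _ => c ζ := fun ξ => wellFounded_lt.fix_eq step ξ
  have key : ∀ ξ, c ξ ∈ U ξ ∧ ∃ χ : G →+ AddCircle (1 : ℝ), ∀ ζ ≤ ξ, χ (s ζ) = c ζ := by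
    intro ξ
    induction ξ using WellFoundedLT.induction with | _ ξ ih =>
    obtain ⟨χ, hχ⟩ := exists_char_glue s c (Set.Iio ξ) fun ζ hζ => (ih ζ hζ).2
    obtain ⟨χ', h1, h2⟩ := h ξ χ fun ζ hζ => by rw [hχ ζ hζ]; exact (ih ζ hζ).1
    have hex : ∃ χ, P ξ (fun ζ _ => c ζ) χ := ⟨χ', fun ζ hζ => (h1 ζ hζ).trans (hχ ζ hζ), h2⟩
    have hcξ : c ξ = hex.choose (s ξ) := by rw [hc]; exact dif_pos hex
    refine ⟨by rw [hcξ]; exact hex.choose_spec.2, hex.choose, fun ζ hζ => ?_⟩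
    rcases hζ.lt_or_eq with hlt | rfl
    · exact hex.choose_spec.1 ζ hlt
    · exact hcξ.symm
  obtain ⟨χ, hχ⟩ := exists_char_glue s c Set.univ fun ζ _ => (key ζ).2
  exact ⟨χ, fun ξ => by rw [hχ ξ trivial]; exact (key ξ).1⟩

lemma exists_addOrderOf_eq (k : ℕ) : ∃ t : AddCircle (1 : ℝ), addOrderOf t = k := by
  rcases Nat.eq_zero_or_pos k with rfl | hk
  · refine ⟨((√2 : ℝ) : AddCircle (1 : ℝ)), ?_⟩
    rw [addOrderOf_eq_zero_iff']
    intro n hn h0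
    rw [← AddCircle.coe_nsmul, AddCircle.coe_eq_zero_iff] at h0
    obtain ⟨m, hm⟩ := h0
    have := irrational_sqrt_two.natCast_mul hn.ne'
    exact this ⟨m, by simpa using hm⟩
  · exact ⟨_, AddCircle.addOrderOf_period_div hk⟩

/-! ### Density -/

/-- A form of the Hewitt–Marczewski–Pondiczery theorem: there are `τ` points `c ξ` of `𝕋 ^ I`,
labelled by natural numbers `N ξ`, such that the points with a given label `n` beyond a given
index `η` are dense. Each point depends only on the trace of (a code for) the coordinate on a
finite subset of `τ`. -/
lemma exists_targets (τ : Cardinal.{u}) (hτ : ℵ₀ ≤ τ) {I : Type u} (hI : #I ≤ 2 ^ τ) :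
    ∃ (c : τ.ord.ToType → I → AddCircle (1 : ℝ)) (N : τ.ord.ToType → ℕ),
      ∀ (F : Finset I) (y : I → AddCircle (1 : ℝ)) (ε : ℝ), 0 < ε → ∀ (n : ℕ) (η : τ.ord.ToType),
        ∃ ξ, η < ξ ∧ N ξ = n ∧ ∀ i ∈ F, dist (c ξ i) (y i) < ε := by
  classical
  have := Cardinal.noMaxOrder hτ
  let ι := τ.ord.ToType
  have hι : #ι = τ := Cardinal.mk_ord_toType τ
  have hinf : Infinite ι := Cardinal.infinite_iff.2 (by rwa [hι])
  obtain ⟨b⟩ : Nonempty (I ↪ Set ι) := by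
    change #I ≤ #(Set ι)
    rwa [mk_set, hι]
  -- a point is coded by a finite `E ⊆ ι` and a rational number for each subset of `E`
  let R := Σ E : Finset ι, (Set E → ℚ)
  have hR : #R ≤ τ := by
    rw [mk_sigma]
    refine (Cardinal.sum_le_mk_mul_iSup _).trans ?_
    rw [Cardinal.mk_finset_of_infinite, hι]
    refine Cardinal.mul_le_of_le hτ le_rfl ?_
    refine ciSup_le' fun E => ?_
    refine le_trans ?_ hτ
    exact Cardinal.mk_le_aleph0
  -- the last factor makes every pair in `R × ℕ` occur `τ` many times, hence cofinally
  obtain ⟨g⟩ : Nonempty ((R × ℕ × ι) ↪ ι) := by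
    have : #(R × ℕ × ι) ≤ #ι := by
      simp only [mk_prod, hι, lift_id, lift_uzero, mk_nat, lift_aleph0]
      refine Cardinal.mul_le_of_le hτ hR (Cardinal.mul_le_of_le hτ hτ le_rfl)
    exact this
  let e : ι → R × ℕ × ι := Function.invFun g
  have heg : ∀ x, e (g x) = x := Function.leftInverse_invFun g.injective
  let tr : (E : Finset ι) → I → Set E := fun E i => {k | (k : ι) ∈ b i}
  let val : R → I → ℚ := fun r i => r.2 (tr r.1 i)
  refine ⟨fun ξ i => ((val (e ξ).1 i : ℚ) : ℝ), fun ξ => (e ξ).2.1, ?_⟩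
  intro F y ε hε n η
  -- a finite set of indices telling the members of `F` apart
  obtain ⟨E, hE⟩ : ∃ E : Finset ι, ∀ i ∈ F, ∀ i' ∈ F,
      tr E i = tr E i' → i = i' := by
    have hsep : ∀ p : I × I, ∃ k, p.1 ≠ p.2 → ¬ (k ∈ b p.1 ↔ k ∈ b p.2) := by
      intro p
      by_cases hp : p.1 = p.2
      · exact ⟨Classical.arbitrary _, fun h => absurd hp h⟩
      · by_contra hcon
        push Not at hcon
        exact hp (b.injective (Set.ext fun k => (hcon k).2))
    choose k hk using hsep
    refine ⟨(F ×ˢ F).image k, fun i hi i' hi' hii => ?_⟩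
    by_contra hne
    have hmem : k (i, i') ∈ (F ×ˢ F).image k :=
      Finset.mem_image_of_mem k (Finset.mem_product.2 ⟨hi, hi'⟩)
    exact hk (i, i') hne (Set.ext_iff.1 hii ⟨_, hmem⟩)
  have hq : ∀ i, ∃ q : ℚ, dist (((q : ℝ)) : AddCircle (1 : ℝ)) (y i) < ε := by
    intro i
    obtain ⟨x, hx⟩ := QuotientAddGroup.mk_surjective (y i)
    obtain ⟨q, h1, h2⟩ := exists_rat_btwn (show x < x + ε by linarith)
    refine ⟨q, ?_⟩
    rw [← hx, dist_eq_norm]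
    refine lt_of_le_of_lt (QuotientAddGroup.norm_mk_le_norm (m := (q : ℝ) - x)) ?_
    rw [Real.norm_eq_abs, abs_lt]
    constructor <;> linarith
  choose q hq using hq
  let ψ : Set E → ℚ := fun v =>
    if h : ∃ i ∈ F, tr E i = v then q h.choose else 0
  have hψ : ∀ i ∈ F, ψ (tr E i) = q i := by
    intro i hi
    have h : ∃ i' ∈ F, tr E i' = tr E i := ⟨i, hi, rfl⟩
    have h2 := hE _ h.choose_spec.1 _ hi h.choose_spec.2
    simp only [ψ]
    rw [dif_pos h, h2]
  obtain ⟨k, hk⟩ : ∃ k, η < g (⟨E, ψ⟩, n, k) := by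
    by_contra hcon
    push Not at hcon
    obtain ⟨η', hη'⟩ := exists_gt η
    have h1 : #ι ≤ #(Set.Iio η') := by
      refine Cardinal.mk_le_of_injective
        (f := fun k => ⟨g (⟨E, ψ⟩, n, k), (hcon k).trans_lt hη'⟩) ?_
      intro k k' hkk
      have := g.injective (Subtype.mk.inj hkk)
      simpa using this
    exact absurd (Cardinal.mk_Iio_lt η' (by simp)) (not_lt.2 h1)
  refine ⟨_, hk, by simp [heg], fun i hi => ?_⟩
  have hval : val (e (g (⟨E, ψ⟩, n, k))).1 i = q i := by rw [heg]; exact hψ i hi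
  change dist (((val (e (g (⟨E, ψ⟩, n, k))).1 i : ℚ) : ℝ) : AddCircle (1 : ℝ)) (y i) < ε
  rw [hval]
  exact hq i

/-- Transfinite choice of elements of `S` such that `n ξ • s ξ` avoids the subgroup generated by
the earlier ones. -/
lemma exists_independent_seq {G ι : Type u} [AddCommGroup G] [LinearOrder ι] [WellFoundedLT ι]
    (S : Set G) (n : ι → ℕ)
    (h : ∀ ξ, ∀ T : Set G, #T ≤ #(Set.Iio ξ) → ∃ x ∈ S, n ξ • x ∉ AddSubgroup.closure T) :
    ∃ s : ι → G, ∀ ξ, s ξ ∈ S ∧ n ξ • s ξ ∉ AddSubgroup.closure (s '' Set.Iio ξ) := by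
  classical
  have h' : ∀ ξ, ∀ c : (ζ : ι) → ζ < ξ → G, ∃ x, x ∈ S ∧
      n ξ • x ∉ AddSubgroup.closure (Set.range fun ζ : Set.Iio ξ => c ζ ζ.2) := by
    intro ξ c
    obtain ⟨x, hx⟩ := h ξ (Set.range fun ζ : Set.Iio ξ => c ζ ζ.2) Cardinal.mk_range_le
    exact ⟨x, hx⟩
  choose step hstep using h'
  let s : ι → G := wellFounded_lt.fix step
  have hs : ∀ ξ, s ξ = step ξ fun ζ _ => s ζ := fun ξ => wellFounded_lt.fix_eq step ξ
  refine ⟨s, fun ξ => ?_⟩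
  have := hstep ξ fun ζ _ => s ζ
  rw [← hs] at this
  rwa [Set.image_eq_range]

lemma mem_closure_image_Iic {G ι : Type*} [AddCommGroup G] [LinearOrder ι] (s : ι → G) (A : Set ι)
    {h : G} (hh : h ∈ AddSubgroup.closure (s '' A)) :
    h = 0 ∨ ∃ ζ ∈ A, h ∈ AddSubgroup.closure (s '' Set.Iic ζ) := by
  induction hh using AddSubgroup.closure_induction with
  | mem x hx =>
    obtain ⟨ζ, hζ, rfl⟩ := hx
    exact Or.inr ⟨ζ, hζ, AddSubgroup.subset_closure ⟨ζ, le_rfl, rfl⟩⟩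
  | zero => exact Or.inl rfl
  | add x y _ _ hx hy =>
    rcases hx with rfl | ⟨ζ, hζ, hx⟩
    · simpa using hy
    rcases hy with rfl | ⟨ζ', hζ', hy⟩
    · rw [add_zero]; exact Or.inr ⟨ζ, hζ, hx⟩
    refine Or.inr ⟨max ζ ζ', ?_, add_mem ?_ ?_⟩
    · rcases max_choice ζ ζ' with h | h <;> rw [h] <;> assumption
    · exact AddSubgroup.closure_mono
        (Set.image_mono (Set.Iic_subset_Iic.2 (le_max_left _ _))) hx
    · exact AddSubgroup.closure_mono
        (Set.image_mono (Set.Iic_subset_Iic.2 (le_max_right _ _))) hy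
  | neg x _ hx =>
    rcases hx with rfl | ⟨ζ, hζ, hx⟩
    · simp
    · exact Or.inr ⟨ζ, hζ, neg_mem hx⟩

/-- Let `ξ` be least such that `h` lies in the subgroup generated by the `s ζ` with `ζ ≤ ξ`. A
character that vanishes on the `s ζ` with `ζ < ξ` and is faithful on the cyclic group generated
by `s ξ` modulo them does not vanish at `h`, unless `h = 0`. -/
lemma eq_zero_of_forall_char {G ι I : Type*} [AddCommGroup G] [LinearOrder ι] [WellFoundedLT ι]
    (s : ι → G) (η : I → ι) (hη : Function.Surjective η) (χ : I → G →+ AddCircle (1 : ℝ))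
    (h0 : ∀ i, ∀ ζ < η i, χ i (s ζ) = 0)
    (h1 : ∀ i, ∀ j : ℤ, j • χ i (s (η i)) = 0 →
      j • s (η i) ∈ AddSubgroup.closure (s '' Set.Iio (η i)))
    (h : G) (hh : h ∈ AddSubgroup.closure (Set.range s)) (hχ : ∀ i, χ i h = 0) : h = 0 := by
  have key : ∀ ζ, h ∈ AddSubgroup.closure (s '' Set.Iic ζ) → h = 0 := by
    intro ζ
    induction ζ using WellFoundedLT.induction with | _ ζ ih =>
    intro hζ
    obtain ⟨i, rfl⟩ := hη ζ
    have hins : s '' Set.Iic (η i) = s '' Set.Iio (η i) ∪ {s (η i)} := by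
      rw [← Set.Iio_insert, Set.image_insert_eq, Set.union_singleton]
    rw [hins, AddSubgroup.closure_union, AddSubgroup.mem_sup] at hζ
    obtain ⟨g, hg, y, hy, hgy⟩ := hζ
    obtain ⟨j, rfl⟩ := AddSubgroup.mem_closure_singleton.1 hy
    have hg0 : χ i g = 0 := by
      have hle : AddSubgroup.closure (s '' Set.Iio (η i)) ≤ (χ i).ker := by
        rw [AddSubgroup.closure_le]
        rintro _ ⟨ζ, hζ, rfl⟩
        exact h0 i ζ hζ
      exact hle hg
    have hj : j • χ i (s (η i)) = 0 := by
      have := hχ i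
      rwa [← hgy, map_add, hg0, zero_add, map_zsmul] at this
    have hlt : h ∈ AddSubgroup.closure (s '' Set.Iio (η i)) := by
      rw [← hgy]; exact add_mem hg (h1 i j hj)
    rcases mem_closure_image_Iic s _ hlt with h | ⟨ζ', hζ', hmem⟩
    · exact h
    · exact ih ζ' hζ' hmem
  rw [← Set.image_univ] at hh
  rcases mem_closure_image_Iic s _ hh with h | ⟨ζ, -, hmem⟩
  · exact h
  · exact key ζ hmem

lemma addOrderOf_large {G : Type*} [AddCommGroup G] (H : AddSubgroup G) (x : G) (N : ℕ)
    (h : (N + 2).factorial • x ∉ H) :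
    addOrderOf (x : G ⧸ H) = 0 ∨ N + 2 < addOrderOf (x : G ⧸ H) := by
  by_contra hcon
  push Not at hcon
  apply h
  rw [← QuotientAddGroup.eq_zero_iff, QuotientAddGroup.mk_nsmul, ← addOrderOf_dvd_iff_nsmul_eq_zero]
  exact Nat.dvd_factorial (Nat.pos_of_ne_zero hcon.1) hcon.2

/-- A character that vanishes before stage `η`, is faithful at stage `η` modulo the previous
stages, and at each later stage `ξ` comes within `1 / (N ξ + 1)` of the target `c ξ`. The last
part is possible because `s ξ` has order greater than `N ξ + 1` modulo the previous stages. -/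
lemma exists_char_step {G : Type*} [AddCommGroup G] {ι : Type*} [LinearOrder ι] [WellFoundedLT ι]
    (s : ι → G) (N : ι → ℕ)
    (hs : ∀ ξ, (N ξ + 2).factorial • s ξ ∉ AddSubgroup.closure (s '' Set.Iio ξ))
    (c : ι → AddCircle (1 : ℝ)) (η : ι) :
    ∃ χ : G →+ AddCircle (1 : ℝ), (∀ ξ < η, χ (s ξ) = 0) ∧
      (∀ j : ℤ, j • χ (s η) = 0 → j • s η ∈ AddSubgroup.closure (s '' Set.Iio η)) ∧
      ∀ ξ, η < ξ → dist (χ (s ξ)) (c ξ) < 1 / (N ξ + 1) := by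
  let H : ι → AddSubgroup G := fun ξ => AddSubgroup.closure (s '' Set.Iio ξ)
  let U : ι → Set (AddCircle (1 : ℝ)) := fun ξ =>
    {t | (ξ < η → t = 0) ∧ (ξ = η → ∀ j : ℤ, j • t = 0 → j • s ξ ∈ H ξ) ∧
      (η < ξ → dist t (c ξ) < 1 / (N ξ + 1))}
  have hvanish : ∀ ξ (δ : G ⧸ H ξ →+ AddCircle (1 : ℝ)), ∀ ζ < ξ,
      δ.comp (QuotientAddGroup.mk' (H ξ)) (s ζ) = 0 := by
    intro ξ δ ζ hζ
    have : QuotientAddGroup.mk' (H ξ) (s ζ) = 0 :=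
      (QuotientAddGroup.eq_zero_iff _).2 (AddSubgroup.subset_closure ⟨ζ, hζ, rfl⟩)
    rw [AddMonoidHom.comp_apply, this, map_zero]
  obtain ⟨χ, hχ⟩ := exists_char_of_step s U (by
    intro ξ χ hχ
    rcases lt_trichotomy ξ η with hlt | rfl | hgt
    · refine ⟨0, fun ζ hζ => ?_, fun _ => rfl, fun h => absurd h hlt.ne, fun h => absurd h hlt.asymm⟩
      exact ((hχ ζ hζ).1 (hζ.trans hlt)).symm
    · obtain ⟨t, ht⟩ := exists_addOrderOf_eq (addOrderOf (s ξ : G ⧸ H ξ))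
      obtain ⟨δ, hδ⟩ := exists_hom_eq (s ξ : G ⧸ H ξ) t (by rw [← ht, addOrderOf_nsmul_eq_zero])
      refine ⟨δ.comp (QuotientAddGroup.mk' (H ξ)), fun ζ hζ => ?_, fun h => absurd h (lt_irrefl _),
        fun _ j hj => ?_, fun h => absurd h (lt_irrefl _)⟩
      · rw [hvanish ξ δ ζ hζ, (hχ ζ hζ).1 hζ]
      · have hj' : j • t = 0 := by rw [← hδ]; exact hj
        rw [← addOrderOf_dvd_iff_zsmul_eq_zero, ht, addOrderOf_dvd_iff_zsmul_eq_zero] at hj'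
        rwa [← QuotientAddGroup.mk_zsmul, QuotientAddGroup.eq_zero_iff] at hj'
    · obtain ⟨u, hu, hd⟩ := exists_torsion_near (addOrderOf (s ξ : G ⧸ H ξ)) (c ξ - χ (s ξ))
        (1 / (N ξ + 1)) (by positivity) (by
          refine (addOrderOf_large (H ξ) (s ξ) (N ξ) (hs ξ)).imp id fun h => ?_
          have h' : ((N ξ + 2 : ℕ) : ℝ) < addOrderOf (s ξ : G ⧸ H ξ) := by exact_mod_cast h
          push_cast at h'
          rw [one_div_one_div]
          linarith)
      obtain ⟨δ, hδ⟩ := exists_hom_eq (s ξ : G ⧸ H ξ) u hu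
      refine ⟨χ + δ.comp (QuotientAddGroup.mk' (H ξ)), fun ζ hζ => ?_, fun h => absurd h hgt.asymm,
        fun h => absurd h hgt.ne', fun _ => ?_⟩
      · rw [AddMonoidHom.add_apply, hvanish ξ δ ζ hζ, add_zero]
      · have : (χ + δ.comp (QuotientAddGroup.mk' (H ξ))) (s ξ) = χ (s ξ) + u := by
          rw [← hδ]; rfl
        rw [this]
        rw [dist_eq_norm] at hd ⊢
        convert hd using 2
        abel)
  exact ⟨χ, fun ξ hξ => (hχ ξ).1 hξ, (hχ η).2.1 rfl, fun ξ hξ => (hχ ξ).2.2 hξ⟩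

/-- The density part of the embedding theorem: a homomorphism to `𝕋 ^ I` that is injective on a
subgroup `H` of cardinality at most `#I` and maps `S ∩ H` onto a dense set. -/
lemma exists_dense_hom {G : Type u} [AddCommGroup G] {I : Type u} (S : Set G) (τ : Cardinal.{u})
    (hτ : ℵ₀ < τ) (hI : #I ≤ 2 ^ τ) (hτI : τ ≤ #I)
    (hS : ∀ n : ℕ, 1 ≤ n → τ ≤ #((fun s => n • s) '' S)) :
    ∃ (H : AddSubgroup G) (φ : G →+ (I → AddCircle (1 : ℝ))), #H ≤ #I ∧
      (∀ x ∈ H, φ x = 0 → x = 0) ∧ Dense (φ '' (S ∩ H)) := by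
  classical
  let ι := τ.ord.ToType
  have hι : #ι = τ := Cardinal.mk_ord_toType τ
  obtain ⟨c, N, hcN⟩ := exists_targets τ hτ.le hI
  obtain ⟨s, hs⟩ := exists_independent_seq (ι := ι) S (fun ξ => (N ξ + 2).factorial) (by
    intro ξ T hT
    have hlt : #(AddSubgroup.closure T) < τ := by
      refine (mk_closure_le T).trans_lt (max_lt (hT.trans_lt ?_) hτ)
      exact (Cardinal.mk_Iio_lt ξ (by simp [ι])).trans_eq hι
    by_contra hcon
    push Not at hcon
    refine absurd ((hS _ (Nat.factorial_pos (N ξ + 2))).trans (Cardinal.mk_le_mk_of_subset ?_))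
      (not_le.2 hlt)
    rintro _ ⟨x, hx, rfl⟩
    exact hcon x hx)
  have hne : Nonempty ι := by
    rw [← Cardinal.mk_ne_zero_iff, hι]
    exact (Cardinal.aleph0_pos.trans hτ).ne'
  obtain ⟨g⟩ : Nonempty (ι ↪ I) := by
    change #ι ≤ #I
    rwa [hι]
  let η : I → ι := Function.invFun g
  have hη : Function.Surjective η := Function.invFun_surjective g.injective
  choose χ h0 h1 h2 using fun i => exists_char_step s N (fun ξ => (hs ξ).2) (fun ξ => c ξ i) (η i)
  refine ⟨AddSubgroup.closure (Set.range s), AddMonoidHom.pi χ, ?_, ?_, ?_⟩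
  · refine (mk_closure_le _).trans (max_le ?_ (hτ.le.trans hτI))
    exact Cardinal.mk_range_le.trans (hι.le.trans hτI)
  · intro x hx hx0
    exact eq_zero_of_forall_char s η hη χ h0 h1 x hx fun i => congrFun hx0 i
  · rw [dense_iff_inter_open]
    rintro V hV ⟨y, hy⟩
    obtain ⟨F, u, hu, hFu⟩ := isOpen_pi_iff.1 hV y hy
    obtain ⟨ε, hε0, hε⟩ : ∃ ε : ℝ, 0 < ε ∧ ∀ i ∈ F, Metric.ball (y i) ε ⊆ u i := by
      have : ∀ᶠ ε : ℝ in nhdsWithin 0 (Set.Ioi 0), ∀ i ∈ F, Metric.ball (y i) ε ⊆ u i := by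
        rw [Filter.eventually_all_finset]
        intro i hi
        obtain ⟨δ, hδ0, hδ⟩ := Metric.isOpen_iff.1 (hu i hi).1 (y i) (hu i hi).2
        filter_upwards [Ioo_mem_nhdsGT hδ0] with ε hε
        exact (Metric.ball_subset_ball hε.2.le).trans hδ
      obtain ⟨ε, h1, h2⟩ := (this.and self_mem_nhdsWithin).exists
      exact ⟨ε, h2, h1⟩
    obtain ⟨n, hn⟩ := exists_nat_one_div_lt (half_pos hε0)
    obtain ⟨M, hM⟩ := (F.image η).exists_le
    obtain ⟨ξ, hξ, hNξ, hcξ⟩ := hcN F y (ε / 2) (half_pos hε0) n M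
    refine ⟨AddMonoidHom.pi χ (s ξ), hFu fun i hi => hε i hi ?_, s ξ,
      ⟨(hs ξ).1, AddSubgroup.subset_closure ⟨ξ, rfl⟩⟩, rfl⟩
    have hlt : η i < ξ := (hM _ (Finset.mem_image_of_mem η hi)).trans_lt hξ
    have h3 := h2 i ξ hlt
    rw [hNξ] at h3
    have h4 := hcξ i hi
    have h5 := dist_triangle (χ i (s ξ)) (c ξ i) (y i)
    change dist (χ i (s ξ)) (y i) < ε
    linarith

/-! ### The logarithm of a cardinal and dense subsets of powers of the circle -/

lemma aleph0_le_clog (κ : Cardinal.{u}) : ℵ₀ ≤ clog κ ∧ κ ≤ 2 ^ clog κ := by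
  have hne : {τ : Cardinal.{u} | ℵ₀ ≤ τ ∧ κ ≤ (2 : Cardinal.{u}) ^ τ}.Nonempty :=
    ⟨max ℵ₀ κ, le_max_left _ _, (le_max_right _ _).trans (Cardinal.cantor _).le⟩
  exact csInf_mem hne

lemma clog_le {κ τ : Cardinal.{u}} (h : ℵ₀ ≤ τ) (h' : κ ≤ 2 ^ τ) : clog κ ≤ τ :=
  csInf_le' ⟨h, h'⟩

/-- If `V` and `W` are disjoint nonempty open sets of the circle, the traces on a dense set `D` of
the cylinders `{x | x i ∈ V}` are distinct for distinct `i`, whence `#I ≤ 2 ^ #D`. -/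
lemma clog_le_of_dense {I : Type u} [Infinite I] (D : Set (I → AddCircle (1 : ℝ))) (hD : Dense D) :
    clog #I ≤ #D := by
  classical
  have hpt : (0 : AddCircle (1 : ℝ)) ≠ ((1 / 2 : ℝ) : AddCircle (1 : ℝ)) := by
    intro h
    have := AddCircle.addOrderOf_period_div (p := (1 : ℝ)) (n := 2) two_pos
    norm_num at h this
    rw [← h] at this
    simp at this
  obtain ⟨V, W, hV, hW, hv, hw, hVW⟩ := t2_separation hpt
  have h1 : #I ≤ 2 ^ #D := by
    rw [← Cardinal.mk_set]
    refine Cardinal.mk_le_of_injective (f := fun i => {d : D | (d : I → AddCircle (1 : ℝ)) i ∈ V}) ?_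
    intro i i' hii
    by_contra hne
    have hopen : IsOpen {x : I → AddCircle (1 : ℝ) | x i ∈ V ∧ x i' ∈ W} :=
      (hV.preimage (continuous_apply i)).inter (hW.preimage (continuous_apply i'))
    obtain ⟨d, ⟨hd1, hd2⟩, hdD⟩ := hD.inter_open_nonempty _ hopen
      ⟨Function.update (fun _ => ((1 / 2 : ℝ) : AddCircle (1 : ℝ))) i 0, by
        simp only [Set.mem_ofPred_eq, Function.update_self,
          Function.update_of_ne (Ne.symm hne)]
        exact ⟨hv, hw⟩⟩
    have h3 : (⟨d, hdD⟩ : D) ∈ {d : D | (d : I → AddCircle (1 : ℝ)) i ∈ V} := hd1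
    have h4 : (⟨d, hdD⟩ : D) ∈ {d : D | (d : I → AddCircle (1 : ℝ)) i' ∈ V} :=
      (Set.ext_iff.1 hii ⟨d, hdD⟩).1 h3
    exact Set.disjoint_left.1 hVW h4 hd2
  refine clog_le ?_ h1
  by_contra hlt
  rw [not_le] at hlt
  have h2 := Cardinal.power_lt_aleph0 (Cardinal.natCast_lt_aleph0 (n := 2)) hlt
  exact absurd ((Cardinal.aleph0_le_mk I).trans h1) (not_le.2 (by exact_mod_cast h2))

lemma nsmul_surjective_pi {I : Type*} (n : ℕ) (hn : 1 ≤ n) :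
    Function.Surjective fun x : I → AddCircle (1 : ℝ) => n • x := by
  intro x
  refine ⟨fun i => DivisibleBy.div (x i) (n : ℤ), ?_⟩
  ext i
  have := DivisibleBy.div_cancel (x i) (show (n : ℤ) ≠ 0 by positivity)
  simpa using this

/-- Let `κ > 𝔠` and `τ = log κ`. For a subset `S` of an abelian group `G`, the
following are equivalent: (i) there is an injective group homomorphism `ϖ : G → 𝕋^κ` with
`ϖ(S)` dense in `𝕋^κ`; (ii) `|G| ≤ 2^κ` and `τ ≤ |nS|` for every integer `n ≥ 1`;
(iii) `|G| ≤ 2^κ` and `S` is `τ`-wide. -/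
theorem stmt7 {G : Type u} [AddCommGroup G] (κ : Cardinal.{u})
    (hκ : Cardinal.continuum < κ) (S : Set G) :
    List.TFAE [
      ∃ ϖ : G →+ (κ.out → AddCircle (1 : ℝ)), Function.Injective ϖ ∧ Dense (⇑ϖ '' S),
      #G ≤ (2 : Cardinal.{u}) ^ κ ∧ ∀ n : ℕ, 1 ≤ n → clog κ ≤ #((fun s => n • s) '' S),
      #G ≤ (2 : Cardinal.{u}) ^ κ ∧ IsWide (clog κ) S ] := by
  have hI : #κ.out = κ := Cardinal.mk_out κ
  have hκ0 : ℵ₀ ≤ κ := Cardinal.aleph0_le_continuum.trans hκ.le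
  have : Infinite κ.out := Cardinal.infinite_iff.2 (by rwa [hI])
  obtain ⟨hc0, hcκ⟩ := aleph0_le_clog κ
  have hc1 : ℵ₀ < clog κ := by
    refine lt_of_le_of_ne hc0 fun h => ?_
    rw [← h, Cardinal.two_power_aleph0] at hcκ
    exact absurd hκ (not_lt.2 hcκ)
  tfae_have 1 → 2 := by
    rintro ⟨ϖ, hinj, hd⟩
    refine ⟨?_, fun n hn => ?_⟩
    · refine (Cardinal.mk_le_of_injective hinj).trans ?_
      rw [mk_arrow, lift_uzero, hI, ← Cardinal.power_eq_two_power hκ0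
        ((Cardinal.natCast_lt_aleph0 (n := 2)).le.trans Cardinal.aleph0_le_continuum) hκ.le]
      refine Cardinal.power_le_power_right ?_
      rw [← Cardinal.lift_continuum.{u, 0}, Cardinal.lift_le, ← Cardinal.mk_real]
      exact Cardinal.mk_quotient_le
    · have h1 : Dense ((fun x => n • x) '' (ϖ '' S)) :=
        (nsmul_surjective_pi n hn).denseRange.dense_image (by fun_prop) hd
      have h2 : (fun x => n • x) '' (ϖ '' S) = ϖ '' ((fun s => n • s) '' S) := by
        simp only [Set.image_image, map_nsmul]
      rw [h2] at h1
      have h3 := clog_le_of_dense _ h1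
      rw [hI] at h3
      exact h3.trans Cardinal.mk_image_le
  tfae_have 2 → 1 := by
    rintro ⟨hG, hS⟩
    obtain ⟨H, φ, hH, hφ, hd⟩ := exists_dense_hom (I := κ.out) S (clog κ) hc1 (by rwa [hI])
      (by rw [hI]; exact clog_le hκ0 (Cardinal.cantor _).le) hS
    obtain ⟨ψ, hψ, hψφ⟩ := exists_injective_extension (I := κ.out) (by rwa [hI]) H hH φ hφ
    refine ⟨ψ, hψ, hd.mono ?_⟩
    rintro _ ⟨x, ⟨hxS, hxH⟩, rfl⟩
    exact ⟨x, hxS, hψφ x hxH⟩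
  tfae_have 2 → 3 := by
    rintro ⟨hG, hS⟩
    refine ⟨hG, fun n hn S' _ hS' => ?_⟩
    rw [Set.sdiff_nonempty]
    intro hsub
    have h1 := (hS n hn).trans (Cardinal.mk_le_mk_of_subset hsub)
    exact absurd (h1.trans (mk_closure_le S')) (not_le.2 (max_lt hS' hc1))
  tfae_have 3 → 2 := by
    rintro ⟨hG, hS⟩
    refine ⟨hG, fun n hn => ?_⟩
    by_contra hlt
    rw [not_le] at hlt
    -- `S'` picks one preimage of each element of `nS`
    obtain ⟨S', hS'S, hbij⟩ := Set.SurjOn.exists_bijOn_subset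
      (Set.surjOn_image (fun s : G => n • s) S)
    have hcard : #S' < clog κ := by
      rw [← hbij.image_eq, Cardinal.mk_image_eq_of_injOn _ _ hbij.injOn] at hlt
      exact hlt
    obtain ⟨x, hx, hx'⟩ := hS n hn S' hS'S hcard
    rw [← hbij.image_eq] at hx
    obtain ⟨y, hy, rfl⟩ := hx
    exact hx' (nsmul_mem (AddSubgroup.subset_closure hy) n)
  tfae_finish
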